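/- (Control of the paraproduct form by testing.) Let T be a dyadic interval and ℱ a collection of dyadic subintervals of T with T ∈ ℱ satisfying Σ_{F′∈𝔠_ℱ(F)}|F′|_σ ≤ ½|F|_σ for all F ∈ ℱ. Let f ∈ L²(σ) and set α_ℱ(F) := sup_{G∈ℱ: G⊇F} E^σ_G|f|. For each F ∈ ℱ let Λ_F be a finite subset of the corona 𝒞_ℱ(F), each of whose members has children of positive ω-measure, and let λ^F_J be reals with |λ^F_J| ≤ α_ℱ(F) for J ∈ Λ_F. Then for every g ∈ L²(ω), uniformly over truncations of the Hilbert transform, |Σ_{F∈ℱ} ⟨H(1_F σ), Σ_{J∈Λ_F} λ^F_J·Δ_J^ω g⟩_{L²(ω)}| ≤ C·𝔗_H(σ,ω)·‖f‖_{L²(σ)}·‖g‖_{L²(ω)} for a universal constant C. -/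

import Mathlib

open MeasureTheory Set
open scoped ENNReal Classical

noncomputable section

/-- A dyadic interval `[n·2^k, (n+1)·2^k)`. -/
structure DI where
  k : ℤ
  n : ℤ

namespace DI

/-- The underlying set of a dyadic interval. -/
def set (I : DI) : Set ℝ := Set.Ico ((I.n : ℝ) * (2:ℝ) ^ I.k) (((I.n : ℝ) + 1) * (2:ℝ) ^ I.k)

/-- The side length `ℓ(I)`. -/
def len (I : DI) : ℝ := (2:ℝ) ^ I.k

/-- left endpoint -/
def lo (I : DI) : ℝ := (I.n : ℝ) * (2:ℝ) ^ I.k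

/-- right endpoint -/
def hi (I : DI) : ℝ := ((I.n : ℝ) + 1) * (2:ℝ) ^ I.k

/-- center `c_I` -/
def center (I : DI) : ℝ := ((I.n : ℝ) + 1/2) * (2:ℝ) ^ I.k

/-- left dyadic child -/
def left (I : DI) : DI := ⟨I.k - 1, 2 * I.n⟩

/-- right dyadic child -/
def right (I : DI) : DI := ⟨I.k - 1, 2 * I.n + 1⟩

/-- parent interval -/
def parent (I : DI) : DI := ⟨I.k + 1, Int.fdiv I.n 2⟩

/-- m-th ancestor `π^m I` -/
def anc (I : DI) : ℕ → DI
  | 0 => I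
  | (m+1) => (anc I m).parent

/-- distance of `J ⊆ K` to the boundary of `K` -/
def distToBdry (J K : DI) : ℝ := min (J.lo - K.lo) (K.hi - J.hi)

/-- the child of `I` containing `J` (for `J ⊆ I` strictly) -/
def childContaining (I J : DI) : DI := if J.set ⊆ I.left.set then I.left else I.right

/-- the sibling `θ(I_J)` of the child of `I` containing `J` -/
def sibling (I J : DI) : DI := if J.set ⊆ I.left.set then I.right else I.left

end DI

/-- `J` is an `(r,ε)`-good dyadic interval. -/
def IsGood (r : ℕ) (ε : ℝ) (J : DI) : Prop :=
  ∀ K : DI, J.set ⊆ K.set → (2:ℝ) ^ r * J.len ≤ K.len →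
    J.len ^ ε * K.len ^ (1 - ε) / 2 ≤ DI.distToBdry J K

/-- Poisson integral of `μ` relative to an interval with center `c` and length `ℓ`. -/
def poissonI (c ℓ : ℝ) (μ : Measure ℝ) : ℝ≥0∞ :=
  ∫⁻ y, ENNReal.ofReal (ℓ / (ℓ + |y - c|) ^ 2) ∂μ

/-- Poisson integral `P(I, μ)` for a dyadic interval. -/
def DI.poisson (I : DI) (μ : Measure ℝ) : ℝ≥0∞ := poissonI I.center I.len μ

/-- average `E^μ_K f = (1/|K|_μ) ∫_K f dμ` -/
def avg (μ : Measure ℝ) (K : Set ℝ) (f : ℝ → ℝ) : ℝ := (∫ x in K, f x ∂μ) / (μ K).toReal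

/-- martingale (Haar) difference `Δ_I^μ f` -/
def haar (μ : Measure ℝ) (I : DI) (f : ℝ → ℝ) : ℝ → ℝ := fun x =>
  (I.left.set.indicator (fun _ => avg μ I.left.set f)) x
    + (I.right.set.indicator (fun _ => avg μ I.right.set f)) x
    - (I.set.indicator (fun _ => avg μ I.set f)) x

/-- truncated Hilbert transform `H_t(f σ)(x)` -/
def Htr (σ : Measure ℝ) (f : ℝ → ℝ) (t : ℝ) (x : ℝ) : ℝ :=
  ∫ y in {y : ℝ | t < |y - x|}, f y / (y - x) ∂σ

/-- pairing `⟨H_t(f σ), ψ⟩_{L²(ω)}` -/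
def pairH (σ ω : Measure ℝ) (f ψ : ℝ → ℝ) (t : ℝ) : ℝ :=
  ∫ x, Htr σ f t x * ψ x ∂ω

/-- testing characteristic `𝔗_H(σ, ω)`, uniform over truncations -/
def testH (σ ω : Measure ℝ) : ℝ≥0∞ :=
  ⨆ (a : ℝ) (b : ℝ) (_ : a < b) (t : ℝ) (_ : 0 < t),
    eLpNorm (Htr σ ((Set.Ico a b).indicator 1) t) 2 ω / (σ (Set.Ico a b)) ^ (1/2 : ℝ)

/-- operator norm characteristic `𝔑_H(σ, ω)`, uniform over truncations -/
def normH (σ ω : Measure ℝ) : ℝ≥0∞ :=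
  ⨆ (t : ℝ) (_ : 0 < t) (f : ℝ → ℝ) (_ : MeasureTheory.MemLp f 2 σ),
    eLpNorm (Htr σ f t) 2 ω / eLpNorm f 2 σ

/-- two-tailed Muckenhoupt characteristic with holes `𝒜₂^hole(σ, ω)` -/
def A2hole (σ ω : Measure ℝ) : ℝ≥0∞ :=
  ⨆ (a : ℝ) (b : ℝ) (_ : a < b),
    poissonI ((a+b)/2) (b-a) (ω.restrict (Set.Ico a b)ᶜ) * σ (Set.Ico a b) / ENNReal.ofReal (b-a)
      + ω (Set.Ico a b) / ENNReal.ofReal (b-a) * poissonI ((a+b)/2) (b-a) (σ.restrict (Set.Ico a b)ᶜ)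

/-- offset Muckenhoupt characteristic `A₂^offset(σ, ω)` with parameter `r` -/
def A2offset (r : ℕ) (σ ω : Measure ℝ) : ℝ≥0∞ :=
  ⨆ (Q : DI) (Q' : DI) (_ : Disjoint Q.set Q'.set)
    (_ : ¬ Disjoint (closure Q.set) (closure Q'.set))
    (_ : Q'.len ≤ (2:ℝ) ^ r * Q.len) (_ : Q.len ≤ (2:ℝ) ^ r * Q'.len),
    (ω Q'.set / ENNReal.ofReal Q'.len) * (σ Q.set / ENNReal.ofReal Q.len)

/-- energy `E(J,ω)²` -/
def energySq (ω : Measure ℝ) (J : DI) : ℝ≥0∞ :=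
  (∫⁻ x in J.set, ENNReal.ofReal ((x - avg ω J.set (fun z => z)) ^ 2) ∂ω)
    / (ω J.set * ENNReal.ofReal (J.len ^ 2))

/-- energy characteristic `ℰ₂(σ,ω)²` -/
def energyCharSq (σ ω : Measure ℝ) : ℝ≥0∞ :=
  ⨆ (a : ℝ) (b : ℝ) (_ : a < b) (𝒮 : Set DI)
    (_ : ∀ I ∈ 𝒮, DI.set I ⊆ Set.Ico a b)
    (_ : 𝒮.Pairwise fun I I' => Disjoint I.set I'.set),
    (∑' I : 𝒮, (I : DI).poisson (σ.restrict (Set.Ico a b \ (I : DI).set)) ^ 2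
        * energySq ω (I : DI) * ω (I : DI).set) / σ (Set.Ico a b)

/-- `ℱ`-children: maximal members of `ℱ` strictly contained in `F` -/
def fChildren (ℱ : Set DI) (F : DI) : Set DI :=
  {G | G ∈ ℱ ∧ G.set ⊂ F.set ∧ ∀ H ∈ ℱ, H.set ⊂ F.set → G.set ⊆ H.set → H = G}

/-- m-fold iterated `ℱ`-children -/
def fDesc (ℱ : Set DI) : ℕ → DI → Set DI
  | 0, F => {F}
  | (m+1), F => ⋃ G ∈ fChildren ℱ F, fDesc ℱ m G

/-- the corona `𝒞_ℱ(F)` -/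
def corona (ℱ : Set DI) (F : DI) : Set DI :=
  {I | I.set ⊆ F.set ∧ ∀ F' ∈ ℱ, F'.set ⊂ F.set → ¬ I.set ⊆ F'.set}

/-- `ℱ` is σ-Carleson with norm `Cℱ` -/
def IsCarleson (σ : Measure ℝ) (ℱ : Set DI) (Cℱ : ℝ) : Prop :=
  ∀ S ∈ ℱ, ∑' F : {F : DI // F ∈ ℱ ∧ F.set ⊆ S.set}, σ (F : DI).set
    ≤ ENNReal.ofReal Cℱ * σ S.set

/-- `W` is `(r,ε)`-deeply embedded in `F` -/
def deepIn (r : ℕ) (ε : ℝ) (W F : DI) : Prop :=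
  W.set ⊆ F.set ∧ W.len ≤ (2:ℝ) ^ (-(r:ℤ)) * F.len ∧
    W.len ^ ε * F.len ^ (1 - ε) / 2 ≤ DI.distToBdry W F

/-- the `(r,ε)`-Whitney collection `ℳ_{(r,ε)-deep}(F)` -/
def Mdeep (r : ℕ) (ε : ℝ) (F : DI) : Set DI :=
  {W | deepIn r ε W F ∧ ∀ W' : DI, deepIn r ε W' F → W.set ⊆ W'.set → W' = W}

/-- pointwise Haar projection of the identity function onto a collection `𝒮` -/
def projId (ω : Measure ℝ) (𝒮 : Set DI) : ℝ → ℝ :=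
  fun x => ∑' J : 𝒮, haar ω (J : DI) (fun z => z) x

/-- functional energy characteristic `𝔉(σ, ω)` -/
def funcEnergy (r : ℕ) (ε : ℝ) (σ ω : Measure ℝ) : ℝ≥0∞ :=
  ⨆ (ℱ : Set DI) (h : ℝ → ℝ) (_ : MeasureTheory.MemLp h 2 σ) (_ : ∀ x, 0 ≤ h x),
    (∑' F : ℱ, ∑' W : Mdeep r ε (F : DI),
      ((W : DI).poisson
          (((σ.withDensity fun y => ENNReal.ofReal (h y))).restrict ((F : DI).set)ᶜ)
        / ENNReal.ofReal (W : DI).len) ^ 2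
        * ∫⁻ x in (W : DI).set,
            ENNReal.ofReal
              ((projId ω (corona ℱ (F : DI) ∩ {J : DI | J.set ⊆ (W : DI).set}) x) ^ 2) ∂ω)
      ^ (1/2 : ℝ) / eLpNorm h 2 σ

/-- stopping-time suprema `α_ℱ(F)` of averages of `|f|` -/
def alphaF (σ : Measure ℝ) (ℱ : Set DI) (f : ℝ → ℝ) (F : DI) : ℝ :=
  ⨆ G : {G : DI // G ∈ ℱ ∧ F.set ⊆ G.set}, avg σ (G : DI).set (fun x => |f x|)

/-- projection `𝖯_F f = Σ_{K ⊆ F} Δ_K^σ f` (pointwise tsum) -/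
def dyadicProj (σ : Measure ℝ) (F : DI) (f : ℝ → ℝ) : ℝ → ℝ :=
  fun x => ∑' K : {K : DI // K.set ⊆ F.set}, haar σ (K : DI) f x

/-- concentric triple 3K -/
def tripleSet (K : DI) : Set ℝ :=
  Set.Ico (K.center - 3/2 * K.len) (K.center + 3/2 * K.len)

/-- `K` is good, inside `S`, with triple inside `S` -/
def goodTrip (r : ℕ) (ε : ℝ) (S K : DI) : Prop :=
  IsGood r ε K ∧ K.set ⊆ S.set ∧ tripleSet K ⊆ S.set

/-- `𝒲^trip(S) = {S} ∪ ℳ_good^trip(S)` -/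
def Wtrip (r : ℕ) (ε : ℝ) (S : DI) : Set DI :=
  {S} ∪ {K | goodTrip r ε S K ∧ ∀ K' : DI, goodTrip r ε S K' → K.set ⊆ K'.set → K' = K}

/-- refined Poisson-Energy characteristic `PE_𝒜^{A,trip}(Λ; σ, ω)` -/
def PEtrip (r : ℕ) (ε : ℝ) (σ ω : Measure ℝ) (F A : DI) (𝒜 : Set DI) (Λ : Finset DI) : ℝ≥0∞ :=
  ⨆ (S : DI) (_ : S ∈ fChildren 𝒜 A) (K : DI) (_ : K ∈ Wtrip r ε S),
    (K.poisson (σ.restrict (F.set \ S.set)) / ENNReal.ofReal K.len)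
      * (∑ J ∈ Λ, if J.set ⊆ K.set then eLpNorm (haar ω J (fun z => z)) 2 ω ^ 2 else 0)
          ^ (1/2 : ℝ)
      / (σ K.set) ^ (1/2 : ℝ)

/-- Poisson-Energy characteristic `PE^F(𝒞; σ, ω)` -/
def PEchar (r : ℕ) (ε : ℝ) (σ ω : Measure ℝ) (F : DI) (𝒞 : Set DI) : ℝ≥0∞ :=
  ⨆ (I : DI) (_ : I ∈ 𝒞) (_ : IsGood r ε I),
    I.poisson (σ.restrict (F.set \ I.set)) * (energySq ω I) ^ (1/2 : ℝ)
      * (ω I.set / σ I.set) ^ (1/2 : ℝ)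

/-- dual integration operator `I*μ(α) = Σ_{β ⊆ α} μ(β)` -/
def Istar (μ : DI → ℝ) (α : DI) : ℝ := ∑ᶠ β ∈ {β : DI | β.set ⊆ α.set}, μ β

/-- the minimal intervals in the support of `μ` -/
def minSupp (μ : DI → ℝ) : Set DI :=
  {α | μ α ≠ 0 ∧ ∀ β : DI, μ β ≠ 0 → β.set ⊆ α.set → β = α}

/-- `Σ_{β ∈ S, β ⊊ α} I*μ(β)` -/
def stopSum (μ : DI → ℝ) (S : Set DI) (α : DI) : ℝ :=
  ∑ᶠ β ∈ {β ∈ S | β.set ⊂ α.set}, Istar μ β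

/-- stopping criterion relative to a previous antichain `S` -/
def stopProp (μ : DI → ℝ) (Γ : ℝ) (S : Set DI) (α : DI) : Prop :=
  Γ * stopSum μ S α < Istar μ α

/-- the minimal intervals in `𝒟(o)` satisfying the stopping criterion -/
def nextGen (μ : DI → ℝ) (Γ : ℝ) (o : DI) (S : Set DI) : Set DI :=
  {α | α.set ⊆ o.set ∧ stopProp μ Γ S α ∧
    ∀ β : DI, β.set ⊆ o.set → stopProp μ Γ S β → β.set ⊆ α.set → β = α}

/-- `μ` is `Γ`-irreducible -/
def Irreducible' (μ : DI → ℝ) (Γ : ℝ) (o : DI) : Prop :=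
  ¬ ∃ α : DI, α.set ⊆ o.set ∧ stopProp μ Γ (minSupp μ) α

/-- `α_A(S)` for the Stopping Child Lemma -/
def stopAlpha (σ : Measure ℝ) (r : ℕ) (ε : ℝ) (Λf : Finset DI) (f : ℝ → ℝ) (A S : DI) : ℝ :=
  ⨆ I : {I : DI // IsGood r ε I ∧ I.set ⊆ A.set ∧
      ∃ I0 ∈ Λf, S.set ⊆ I0.set ∧ I0.set ⊂ I.set}, |avg σ (I : DI).set f|

/-!
For `F ∈ ℱ`, testing on the interval `F` and Cauchy–Schwarz in `L²(ω)` bound the `F`-th pairing by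
`𝔗_H · |F|_σ^{1/2} · ‖∑_{J ∈ Λ_F} λ^F_J Δ_J g‖`, and since the Haar differences are orthogonal the
coefficients can be replaced by their bound `α_ℱ(F)`. Cauchy–Schwarz in `F` leaves two square sums.
The coronas are disjoint, so Bessel's inequality gives `∑_F ‖∑_{J ∈ Λ_F} Δ_J g‖² ≤ ‖g‖²`. On the
other side, `α_ℱ(F)` is at most the dyadic maximal function `M f` everywhere on `F`, and `F` minus
its `ℱ`-children carries half of `|F|_σ`; these cores are disjoint, so
`∑_F α_ℱ(F)² |F|_σ ≤ 2 ∫ (M f)² dσ ≤ 8 ‖f‖²`. The resulting constant `√8` is rounded up to `3`.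
-/

/-! ### Square-integrable functions -/

section GeneralMeasure

variable {α ι : Type*} [MeasurableSpace α] {μ : Measure α}

lemma sq_lintegral_mul_le {φ ψ : α → ℝ≥0∞} (hφ : AEMeasurable φ μ) (hψ : AEMeasurable ψ μ) :
    (∫⁻ x, φ x * ψ x ∂μ) ^ 2 ≤ (∫⁻ x, φ x ^ 2 ∂μ) * ∫⁻ x, ψ x ^ 2 ∂μ := by
  have holder := ENNReal.lintegral_mul_le_Lp_mul_Lq μ Real.HolderConjugate.two_two hφ hψ
  simp only [Pi.mul_apply, ENNReal.rpow_two] at holder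
  calc (∫⁻ x, φ x * ψ x ∂μ) ^ 2
      ≤ ((∫⁻ x, φ x ^ 2 ∂μ) ^ (1 / 2 : ℝ) * (∫⁻ x, ψ x ^ 2 ∂μ) ^ (1 / 2 : ℝ)) ^ 2 := by gcongr
    _ = (∫⁻ x, φ x ^ 2 ∂μ) * ∫⁻ x, ψ x ^ 2 ∂μ := by
        simp only [mul_pow, ← ENNReal.rpow_two, ← ENNReal.rpow_mul]
        norm_num

lemma sq_setLAverage_mul_measure_le {φ : α → ℝ≥0∞} (hφ : AEMeasurable φ μ) {s : Set α}
    (hs : μ s ≠ ∞) :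
    (⨍⁻ x in s, φ x ∂μ) ^ 2 * μ s ≤ ∫⁻ x in s, φ x ^ 2 ∂μ := by
  obtain hs0 | hs0 := eq_or_ne (μ s) 0
  · simp [hs0]
  refine (ENNReal.mul_le_mul_iff_left hs0 hs).1 ?_
  calc (⨍⁻ x in s, φ x ∂μ) ^ 2 * μ s * μ s
      = (∫⁻ x in s, φ x * 1 ∂μ) ^ 2 := by
        simp only [mul_one]
        rw [← measure_mul_setLAverage φ hs]
        ring
    _ ≤ (∫⁻ x in s, φ x ^ 2 ∂μ) * ∫⁻ x in s, 1 ^ 2 ∂μ :=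
        sq_lintegral_mul_le hφ.restrict aemeasurable_const
    _ = (∫⁻ x in s, φ x ^ 2 ∂μ) * μ s := by simp

lemma sq_tsum_mul_le (a b : ι → ℝ≥0∞) :
    (∑' i, a i * b i) ^ 2 ≤ (∑' i, a i ^ 2) * ∑' i, b i ^ 2 := by
  let _ : MeasurableSpace ι := ⊤
  simpa only [lintegral_count] using
    sq_lintegral_mul_le (μ := .count) (measurable_from_top (f := a)).aemeasurable
      (measurable_from_top (f := b)).aemeasurable

lemma eLpNorm_two_sq (f : α → ℝ) : eLpNorm f 2 μ ^ 2 = ∫⁻ x, ‖f x‖ₑ ^ 2 ∂μ := by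
  simpa using eLpNorm_nnreal_pow_eq_lintegral (f := f) (μ := μ) two_ne_zero

lemma ofReal_integral_mul_self {f : α → ℝ} (hf : MemLp f 2 μ) :
    ENNReal.ofReal (∫ x, f x * f x ∂μ) = eLpNorm f 2 μ ^ 2 := by
  have hint : Integrable (fun x => f x * f x) μ := hf.integrable_mul hf
  rw [eLpNorm_two_sq, ofReal_integral_eq_lintegral_ofReal hint
    (.of_forall fun x => mul_self_nonneg (f x))]
  refine lintegral_congr fun x => ?_
  rw [← enorm_pow, Real.enorm_of_nonneg (sq_nonneg _), sq]

section Orthogonal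

variable {u : ι → α → ℝ}

lemma integral_sum_mul (hu : ∀ i, MemLp (u i) 2 μ) {g : α → ℝ} (hg : MemLp g 2 μ)
    (s : Finset ι) :
    ∫ x, (∑ i ∈ s, u i x) * g x ∂μ = ∑ i ∈ s, ∫ x, u i x * g x ∂μ := by
  simp only [Finset.sum_mul]
  exact integral_finsetSum s fun i _ => (hu i).integrable_mul hg

lemma integral_sum_mul_self (hu : ∀ i, MemLp (u i) 2 μ)
    (horth : Pairwise fun i j => ∫ x, u i x * u j x ∂μ = 0) (s : Finset ι) :
    ∫ x, (∑ i ∈ s, u i x) * ∑ i ∈ s, u i x ∂μ = ∑ i ∈ s, ∫ x, u i x * u i x ∂μ := by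
  rw [integral_sum_mul hu (memLp_finsetSum s fun i _ => hu i)]
  refine Finset.sum_congr rfl fun i hi => ?_
  simp only [mul_comm (u i _)]
  rw [integral_sum_mul hu (hu i), Finset.sum_eq_single_of_mem i hi fun j _ hj => horth hj]

lemma eLpNorm_two_sum_sq (hu : ∀ i, MemLp (u i) 2 μ)
    (horth : Pairwise fun i j => ∫ x, u i x * u j x ∂μ = 0) (s : Finset ι) :
    eLpNorm (fun x => ∑ i ∈ s, u i x) 2 μ ^ 2 = ∑ i ∈ s, eLpNorm (u i) 2 μ ^ 2 := by
  rw [← ofReal_integral_mul_self (memLp_finsetSum s fun i _ => hu i),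
    integral_sum_mul_self hu horth,
    ENNReal.ofReal_sum_of_nonneg fun i _ => integral_nonneg fun x => mul_self_nonneg (u i x)]
  exact Finset.sum_congr rfl fun i _ => ofReal_integral_mul_self (hu i)

lemma tsum_eLpNorm_two_sq_le (hu : ∀ i, MemLp (u i) 2 μ)
    (horth : Pairwise fun i j => ∫ x, u i x * u j x ∂μ = 0) {g : α → ℝ} (hg : MemLp g 2 μ)
    (hproj : ∀ i, ∫ x, u i x * g x ∂μ = ∫ x, u i x * u i x ∂μ) :
    ∑' i, eLpNorm (u i) 2 μ ^ 2 ≤ eLpNorm g 2 μ ^ 2 := by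
  rw [ENNReal.tsum_eq_iSup_sum]
  refine iSup_le fun s => ?_
  set p : α → ℝ := fun x => ∑ i ∈ s, u i x
  have hp : MemLp p 2 μ := memLp_finsetSum s fun i _ => hu i
  have hpg : ∫ x, p x * g x ∂μ = ∫ x, p x * p x ∂μ := by
    rw [integral_sum_mul hu hg, integral_sum_mul_self hu horth]
    exact Finset.sum_congr rfl fun i _ => hproj i
  have hexpand : ∫ x, (g x - p x) * (g x - p x) ∂μ
      = ∫ x, g x * g x ∂μ - 2 * ∫ x, p x * g x ∂μ + ∫ x, p x * p x ∂μ := by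
    have hint_gg : Integrable (fun x => g x * g x) μ := hg.integrable_mul hg
    have hint_pg : Integrable (fun x => 2 * (p x * g x)) μ := (hp.integrable_mul hg).const_mul 2
    have hint_sub : Integrable (fun x => g x * g x - 2 * (p x * g x)) μ := hint_gg.sub hint_pg
    have hint_pp : Integrable (fun x => p x * p x) μ := hp.integrable_mul hp
    rw [← integral_const_mul, ← integral_sub hint_gg hint_pg,
      ← integral_add hint_sub hint_pp]
    exact integral_congr_ae (.of_forall fun x => by ring)
  rw [← eLpNorm_two_sum_sq hu horth, ← ofReal_integral_mul_self hp, ← ofReal_integral_mul_self hg]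
  refine ENNReal.ofReal_le_ofReal ?_
  have hnonneg : 0 ≤ ∫ x, (g x - p x) * (g x - p x) ∂μ :=
    integral_nonneg fun x => mul_self_nonneg (g x - p x)
  linarith

end Orthogonal

section StrongType

variable {M φ : α → ℝ≥0∞}

lemma lintegral_sq_le_two_mul_lintegral_mul (hM : Measurable M) (hφ : AEMeasurable φ μ)
    (hMtop : ∀ᵐ x ∂μ, M x ≠ ∞)
    (hweak : ∀ t : ℝ≥0∞, t * μ {x | t < M x} ≤ ∫⁻ x in {x | t < M x}, φ x ∂μ) :
    ∫⁻ x, M x ^ 2 ∂μ ≤ 2 * ∫⁻ x, φ x * M x ∂μ := by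
  -- The layer-cake formula is applied to `M` twice: for `M²` against `μ` and for `M` against `ν`.
  set ν := μ.withDensity φ
  have hlevel : ∀ t ∈ Ioi (0 : ℝ), μ {x | t < (M x).toReal} * ENNReal.ofReal (t ^ (2 - 1 : ℝ))
      ≤ ν {x | t < (M x).toReal} := by
    intro t ht
    have hset : {x | t < (M x).toReal} =ᵐ[μ] {x | ENNReal.ofReal t < M x} :=
      hMtop.mono fun x hx => propext (ENNReal.ofReal_lt_iff_lt_toReal (le_of_lt ht) hx).symm
    rw [withDensity_apply _ (measurableSet_lt measurable_const hM.ennreal_toReal),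
      Measure.restrict_congr_set hset, measure_congr hset, mul_comm]
    simpa only [show (2 - 1 : ℝ) = 1 by norm_num, Real.rpow_one] using hweak _
  have hMtop' : ∀ᵐ x ∂ν, M x ≠ ∞ := withDensity_absolutelyContinuous μ φ hMtop
  calc ∫⁻ x, M x ^ 2 ∂μ
      = ∫⁻ x, ENNReal.ofReal ((M x).toReal ^ (2 : ℝ)) ∂μ :=
        lintegral_congr_ae <| hMtop.mono fun x hx => by
          simp only [Real.rpow_two, ENNReal.ofReal_pow ENNReal.toReal_nonneg,
            ENNReal.ofReal_toReal hx]
    _ = ENNReal.ofReal 2 * ∫⁻ t in Ioi 0,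
          μ {x | t < (M x).toReal} * ENNReal.ofReal (t ^ (2 - 1 : ℝ)) :=
        lintegral_rpow_eq_lintegral_meas_lt_mul μ (.of_forall fun _ => ENNReal.toReal_nonneg)
          hM.ennreal_toReal.aemeasurable two_pos
    _ ≤ 2 * ∫⁻ t in Ioi 0, ν {x | t < (M x).toReal} := by
        rw [ENNReal.ofReal_ofNat]
        gcongr 2 * ?_
        exact setLIntegral_mono' measurableSet_Ioi hlevel
    _ = 2 * ∫⁻ x, ENNReal.ofReal (M x).toReal ∂ν := by
        rw [lintegral_eq_lintegral_meas_lt ν (.of_forall fun _ => ENNReal.toReal_nonneg)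
          hM.ennreal_toReal.aemeasurable]
    _ = 2 * ∫⁻ x, M x ∂ν := by
        rw [lintegral_congr_ae (hMtop'.mono fun x hx => ENNReal.ofReal_toReal hx)]
    _ = 2 * ∫⁻ x, φ x * M x ∂μ := by
        rw [lintegral_withDensity_eq_lintegral_mul₀ hφ hM.aemeasurable]
        rfl

lemma lintegral_sq_le_four_mul_lintegral_sq (hM : Measurable M) (hφ : AEMeasurable φ μ)
    (hMfin : ∫⁻ x, M x ^ 2 ∂μ ≠ ∞)
    (hweak : ∀ t : ℝ≥0∞, t * μ {x | t < M x} ≤ ∫⁻ x in {x | t < M x}, φ x ∂μ) :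
    ∫⁻ x, M x ^ 2 ∂μ ≤ 4 * ∫⁻ x, φ x ^ 2 ∂μ := by
  set A := ∫⁻ x, M x ^ 2 ∂μ
  obtain hA0 | hA0 := eq_or_ne A 0
  · simp [hA0]
  have hMtop : ∀ᵐ x ∂μ, M x ≠ ∞ := by
    filter_upwards [ae_lt_top (hM.pow_const 2) hMfin] with x hx
    simpa using hx.ne
  have hself : A * A ≤ 4 * (∫⁻ x, φ x ^ 2 ∂μ) * A :=
    calc A * A = A ^ 2 := (sq A).symm
      _ ≤ (2 * ∫⁻ x, φ x * M x ∂μ) ^ 2 := by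
          gcongr
          exact lintegral_sq_le_two_mul_lintegral_mul hM hφ hMtop hweak
      _ = 4 * (∫⁻ x, φ x * M x ∂μ) ^ 2 := by rw [mul_pow]; norm_num
      _ ≤ 4 * ((∫⁻ x, φ x ^ 2 ∂μ) * A) := by
          gcongr
          exact sq_lintegral_mul_le hφ hM.aemeasurable
      _ = 4 * (∫⁻ x, φ x ^ 2 ∂μ) * A := (mul_assoc _ _ _).symm
  exact (ENNReal.mul_le_mul_iff_left hA0 hMfin).1 hself

end StrongType

end GeneralMeasure

/-! ### Dyadic intervals -/

namespace DI

instance : Countable DI :=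
  Function.Injective.countable (f := fun I : DI => (I.k, I.n)) fun I J h => by
    cases I; cases J; simp_all

lemma mem_set_iff_floor {I : DI} {x : ℝ} : x ∈ I.set ↔ ⌊x / 2 ^ I.k⌋ = I.n := by
  have hpow : (0 : ℝ) < 2 ^ I.k := by positivity
  rw [Int.floor_eq_iff, le_div_iff₀ hpow, div_lt_iff₀ hpow]
  rfl

lemma mem_set_congr {I J : DI} (hk : J.k ≤ I.k) {x y : ℝ} (hx : x ∈ J.set) (hy : y ∈ J.set) :
    x ∈ I.set ↔ y ∈ I.set := by
  obtain ⟨d, hd⟩ := Int.le.dest hk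
  have hfloor (z : ℝ) : ⌊z / 2 ^ I.k⌋ = ⌊z / 2 ^ J.k⌋ / ((2 ^ d : ℕ) : ℤ) := by
    rw [← Int.floor_div_natCast, div_div, ← hd, zpow_add₀ two_ne_zero]
    norm_cast
  rw [mem_set_iff_floor] at hx hy ⊢
  rw [mem_set_iff_floor, hfloor, hfloor, hx, hy]

lemma subset_of_mem {I J : DI} (hk : J.k ≤ I.k) {x : ℝ} (hxI : x ∈ I.set) (hxJ : x ∈ J.set) :
    J.set ⊆ I.set :=
  fun _ hy => (mem_set_congr hk hxJ hy).1 hxI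

lemma eq_of_mem {I J : DI} (hk : J.k = I.k) {x : ℝ} (hxI : x ∈ I.set) (hxJ : x ∈ J.set) :
    J = I := by
  rw [mem_set_iff_floor] at hxI hxJ
  rw [hk] at hxJ
  cases I; cases J
  simp_all

lemma lo_lt_hi (I : DI) : I.lo < I.hi :=
  mul_lt_mul_of_pos_right (lt_add_one _) (by positivity)

lemma lo_mem (I : DI) : I.lo ∈ I.set := left_mem_Ico.2 I.lo_lt_hi

lemma k_le_of_subset {I J : DI} (h : J.set ⊆ I.set) : J.k ≤ I.k := by
  obtain ⟨hlo, hhi⟩ := (Ico_subset_Ico_iff J.lo_lt_hi).1 h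
  have hpow : (2 : ℝ) ^ J.k ≤ 2 ^ I.k := by
    simp only [lo, hi] at hlo hhi
    linarith
  exact (zpow_le_zpow_iff_right₀ one_lt_two).1 hpow

lemma set_injective : Function.Injective DI.set := fun I _ h =>
  eq_of_mem ((k_le_of_subset h.le).antisymm (k_le_of_subset h.ge)) (h ▸ I.lo_mem) I.lo_mem

lemma k_lt_of_ssubset {I J : DI} (h : J.set ⊂ I.set) : J.k < I.k :=
  (k_le_of_subset h.subset).lt_of_ne fun hk =>
    h.ne (congrArg DI.set (eq_of_mem hk (h.subset J.lo_mem) J.lo_mem))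

lemma ssubset_or_ssubset_of_mem {I J : DI} (hne : I ≠ J) {x : ℝ} (hxI : x ∈ I.set)
    (hxJ : x ∈ J.set) : I.set ⊂ J.set ∨ J.set ⊂ I.set := by
  obtain hk | hk := le_total I.k J.k
  · exact .inl ((subset_of_mem hk hxJ hxI).ssubset_of_ne (set_injective.ne hne))
  · exact .inr ((subset_of_mem hk hxI hxJ).ssubset_of_ne (set_injective.ne hne.symm))

lemma measurableSet_set (I : DI) : MeasurableSet I.set := measurableSet_Ico

lemma measure_set_ne_top (μ : Measure ℝ) [IsLocallyFiniteMeasure μ] (I : DI) : μ I.set ≠ ∞ :=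
  measure_Ico_lt_top.ne

lemma hi_left (I : DI) : I.left.hi = I.right.lo := by
  simp [left, right, lo, hi]

lemma lo_left (I : DI) : I.left.lo = I.lo := by
  simp only [left, lo, zpow_sub_one₀ (two_ne_zero (α := ℝ))]
  push_cast
  ring

lemma hi_right (I : DI) : I.right.hi = I.hi := by
  simp only [right, hi, zpow_sub_one₀ (two_ne_zero (α := ℝ))]
  push_cast
  ring

lemma left_union_right (I : DI) : I.left.set ∪ I.right.set = I.set := by
  change Ico I.left.lo I.left.hi ∪ Ico I.right.lo I.right.hi = Ico I.lo I.hi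
  rw [I.hi_left, Ico_union_Ico_eq_Ico (I.hi_left ▸ I.left.lo_lt_hi.le) I.right.lo_lt_hi.le,
    I.lo_left, I.hi_right]

lemma disjoint_left_right (I : DI) : Disjoint I.left.set I.right.set :=
  Ico_disjoint_Ico.2 <| (min_le_left _ _).trans (I.hi_left.le.trans (le_max_right _ _))

lemma left_subset (I : DI) : I.left.set ⊆ I.set := I.left_union_right ▸ subset_union_left

lemma right_subset (I : DI) : I.right.set ⊆ I.set := I.left_union_right ▸ subset_union_right

lemma exists_pairwiseDisjoint_biUnion_eq (𝒮 : Finset DI) :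
    ∃ 𝓜 ⊆ 𝒮, (𝓜 : Set DI).PairwiseDisjoint DI.set ∧ ⋃ G ∈ 𝓜, G.set = ⋃ G ∈ 𝒮, G.set := by
  refine ⟨𝒮.filter fun G => ∀ H ∈ 𝒮, ¬ G.set ⊂ H.set, Finset.filter_subset _ _, ?_, ?_⟩
  · intro G hG H hH hne
    simp only [Finset.coe_filter, mem_ofPred_eq] at hG hH
    refine Set.disjoint_left.2 fun x hxG hxH => ?_
    exact (ssubset_or_ssubset_of_mem hne hxG hxH).elim (hG.2 H hH.1) (hH.2 G hG.1)
  · refine (biUnion_mono (Finset.filter_subset _ _) fun _ _ => subset_rfl).antisymm ?_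
    refine iUnion₂_subset fun G hG x hx => ?_
    obtain ⟨H, hH, hmax⟩ := (𝒮.filter fun H => x ∈ H.set).exists_max_image DI.k
      ⟨G, Finset.mem_filter.2 ⟨hG, hx⟩⟩
    simp only [Finset.mem_filter] at hH hmax
    refine mem_biUnion (Finset.mem_filter.2 ⟨hH.1, fun K hK hHK => ?_⟩) hH.2
    exact (k_lt_of_ssubset hHK).not_ge (hmax K ⟨hK, hHK.subset hH.2⟩)

end DI

/-! ### The dyadic maximal function -/

/-- The dyadic maximal function `sup_{G ∈ 𝒢, x ∈ G} E^σ_G φ` over a family `𝒢` of dyadic intervals,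
with values in `[0, ∞]`; intervals of zero `σ`-measure have average zero. -/
def dyadicMaximal (σ : Measure ℝ) (𝒢 : Set DI) (φ : ℝ → ℝ≥0∞) (x : ℝ) : ℝ≥0∞ :=
  ⨆ G ∈ 𝒢, G.set.indicator (fun _ => ⨍⁻ y in G.set, φ y ∂σ) x

section DyadicMaximal

variable {σ : Measure ℝ} {φ : ℝ → ℝ≥0∞}

lemma measurable_dyadicMaximal (𝒢 : Set DI) : Measurable (dyadicMaximal σ 𝒢 φ) :=
  .biSup 𝒢 𝒢.to_countable fun G _ => measurable_const.indicator G.measurableSet_set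

lemma setLAverage_le_dyadicMaximal {𝒢 : Set DI} {G : DI} (hG : G ∈ 𝒢) {x : ℝ} (hx : x ∈ G.set) :
    ⨍⁻ y in G.set, φ y ∂σ ≤ dyadicMaximal σ 𝒢 φ x := by
  refine le_iSup₂_of_le G hG ?_
  rw [indicator_of_mem hx]

lemma dyadicMaximal_mono {𝒢 ℋ : Set DI} (h : 𝒢 ⊆ ℋ) (x : ℝ) :
    dyadicMaximal σ 𝒢 φ x ≤ dyadicMaximal σ ℋ φ x :=
  biSup_mono fun _ hG => h hG

lemma dyadicMaximal_le_iSup_finset (𝒢 : Set DI) (x : ℝ) :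
    dyadicMaximal σ 𝒢 φ x ≤ ⨆ 𝒮 : Finset DI, dyadicMaximal σ 𝒮 φ x :=
  iSup₂_le fun G _ => le_iSup_of_le {G} (le_iSup₂_of_le G (by simp) le_rfl)

lemma setOf_lt_dyadicMaximal (𝒢 : Finset DI) (t : ℝ≥0∞) :
    {x | t < dyadicMaximal σ 𝒢 φ x}
      = ⋃ G ∈ 𝒢.filter fun G => t < ⨍⁻ y in G.set, φ y ∂σ, G.set := by
  ext x
  simp only [dyadicMaximal, mem_ofPred_eq, lt_iSup_iff, mem_iUnion, Finset.mem_filter,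
    Finset.mem_coe, exists_prop, indicator_apply]
  refine exists_congr fun G => ?_
  split_ifs with hx <;> simp [hx]

variable [IsLocallyFiniteMeasure σ]

lemma mul_measure_lt_dyadicMaximal_le (𝒢 : Finset DI) (t : ℝ≥0∞) :
    t * σ {x | t < dyadicMaximal σ 𝒢 φ x}
      ≤ ∫⁻ x in {x | t < dyadicMaximal σ 𝒢 φ x}, φ x ∂σ := by
  rw [setOf_lt_dyadicMaximal]
  obtain ⟨𝓜, hsub, hdisj, hunion⟩ := DI.exists_pairwiseDisjoint_biUnion_eq
    (𝒢.filter fun G => t < ⨍⁻ y in G.set, φ y ∂σ)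
  rw [← hunion, measure_biUnion_finset hdisj fun G _ => G.measurableSet_set,
    lintegral_biUnion_finset hdisj fun G _ => G.measurableSet_set, Finset.mul_sum]
  refine Finset.sum_le_sum fun G hG => ?_
  rw [← measure_mul_setLAverage φ (G.measure_set_ne_top σ), mul_comm]
  gcongr
  exact (Finset.mem_filter.1 (hsub hG)).2.le

lemma lintegral_dyadicMaximal_sq_ne_top (hφ : AEMeasurable φ σ) (hφ2 : ∫⁻ x, φ x ^ 2 ∂σ ≠ ∞)
    (𝒢 : Finset DI) : ∫⁻ x, dyadicMaximal σ 𝒢 φ x ^ 2 ∂σ ≠ ∞ := by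
  have hsum (x : ℝ) : dyadicMaximal σ 𝒢 φ x ^ 2
      ≤ ∑ G ∈ 𝒢, G.set.indicator (fun _ => (⨍⁻ y in G.set, φ y ∂σ) ^ 2) x := by
    simp only [dyadicMaximal, ENNReal.iSup_pow_of_ne_zero two_ne_zero]
    refine iSup₂_le fun G hG => ?_
    refine le_trans ?_ (Finset.single_le_sum (fun _ _ => zero_le) hG)
    by_cases hx : x ∈ G.set <;> simp [hx]
  have hbound : ∫⁻ x, dyadicMaximal σ 𝒢 φ x ^ 2 ∂σ
      ≤ ∑ G ∈ 𝒢, (⨍⁻ y in G.set, φ y ∂σ) ^ 2 * σ G.set := by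
    refine (lintegral_mono hsum).trans_eq ?_
    rw [lintegral_finsetSum _ fun G _ => measurable_const.indicator G.measurableSet_set]
    exact Finset.sum_congr rfl fun G _ => lintegral_indicator_const G.measurableSet_set _
  refine ne_top_of_le_ne_top (ENNReal.sum_ne_top.2 fun G _ => ne_top_of_le_ne_top hφ2 ?_) hbound
  exact (sq_setLAverage_mul_measure_le hφ (G.measure_set_ne_top σ)).trans
    (setLIntegral_le_lintegral _ _)

lemma lintegral_dyadicMaximal_finset_sq_le (hφ : AEMeasurable φ σ) (𝒢 : Finset DI) :
    ∫⁻ x, dyadicMaximal σ 𝒢 φ x ^ 2 ∂σ ≤ 4 * ∫⁻ x, φ x ^ 2 ∂σ := by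
  obtain hφ2 | hφ2 := eq_or_ne (∫⁻ x, φ x ^ 2 ∂σ) ∞
  · simp [hφ2]
  exact lintegral_sq_le_four_mul_lintegral_sq (measurable_dyadicMaximal _) hφ
    (lintegral_dyadicMaximal_sq_ne_top hφ hφ2 𝒢) (mul_measure_lt_dyadicMaximal_le 𝒢)

lemma lintegral_dyadicMaximal_sq_le (hφ : AEMeasurable φ σ) (𝒢 : Set DI) :
    ∫⁻ x, dyadicMaximal σ 𝒢 φ x ^ 2 ∂σ ≤ 4 * ∫⁻ x, φ x ^ 2 ∂σ := by
  have hmono : Monotone fun (𝒮 : Finset DI) x => dyadicMaximal σ 𝒮 φ x ^ 2 :=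
    fun _ _ h x => pow_le_pow_left' (dyadicMaximal_mono (Finset.coe_subset.2 h) x) 2
  calc ∫⁻ x, dyadicMaximal σ 𝒢 φ x ^ 2 ∂σ
      ≤ ∫⁻ x, ⨆ 𝒮 : Finset DI, dyadicMaximal σ 𝒮 φ x ^ 2 ∂σ := by
        gcongr with x
        rw [← ENNReal.iSup_pow]
        gcongr
        exact dyadicMaximal_le_iSup_finset 𝒢 x
    _ = ⨆ 𝒮 : Finset DI, ∫⁻ x, dyadicMaximal σ 𝒮 φ x ^ 2 ∂σ :=
        lintegral_iSup_directed_of_measurable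
          (fun 𝒮 => (measurable_dyadicMaximal _).pow_const 2) hmono.directed_le
    _ ≤ 4 * ∫⁻ x, φ x ^ 2 ∂σ := iSup_le (lintegral_dyadicMaximal_finset_sq_le hφ)

end DyadicMaximal

/-! ### Stopping families -/

lemma exists_fChild {ℱ : Set DI} {F F' : DI} (hF : F ∈ ℱ) (hFF' : F.set ⊂ F'.set) :
    ∃ G ∈ fChildren ℱ F', F.set ⊆ G.set := by
  obtain ⟨_, ⟨G, hG, hFG, hGF', rfl⟩, hmax⟩ := Int.exists_greatest_of_bdd
    (P := fun z => ∃ H ∈ ℱ, F.set ⊆ H.set ∧ H.set ⊂ F'.set ∧ H.k = z)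
    ⟨F'.k, fun _ ⟨_, _, _, hH, hz⟩ => hz ▸ (DI.k_lt_of_ssubset hH).le⟩
    ⟨F.k, F, hF, subset_rfl, hFF', rfl⟩
  refine ⟨G, ⟨hG, hGF', fun H hH hHF' hGH => ?_⟩, hFG⟩
  have hk : H.k ≤ G.k := hmax _ ⟨H, hH, hFG.trans hGH, hHF', rfl⟩
  exact DI.eq_of_mem (hk.antisymm (DI.k_le_of_subset hGH)) G.lo_mem (hGH G.lo_mem)

lemma eq_of_mem_corona {ℱ : Set DI} {F F' J : DI} (hF : F ∈ ℱ) (hF' : F' ∈ ℱ)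
    (hJ : J ∈ corona ℱ F) (hJ' : J ∈ corona ℱ F') : F = F' := by
  by_contra hne
  obtain h | h := DI.ssubset_or_ssubset_of_mem hne (hJ.1 J.lo_mem) (hJ'.1 J.lo_mem)
  · exact hJ'.2 F hF h hJ.1
  · exact hJ.2 F' hF' h hJ'.1

/-- The part of `F` outside all its `ℱ`-children. The cores are pairwise disjoint, and when `ℱ` has
halving mass each of them carries at least half of the mass of its interval. -/
def stoppingCore (ℱ : Set DI) (F : DI) : Set ℝ := F.set \ ⋃ G ∈ fChildren ℱ F, G.set

section StoppingCore

variable {σ : Measure ℝ} {ℱ : Set DI}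

lemma measurableSet_stoppingCore (ℱ : Set DI) (F : DI) : MeasurableSet (stoppingCore ℱ F) :=
  F.measurableSet_set.diff <|
    .biUnion (to_countable (fChildren ℱ F)) fun G _ => G.measurableSet_set

lemma notMem_stoppingCore_of_ssubset {F F' : DI} (hF : F ∈ ℱ) (hFF' : F.set ⊂ F'.set) {x : ℝ}
    (hx : x ∈ F.set) : x ∉ stoppingCore ℱ F' := by
  obtain ⟨G, hG, hFG⟩ := exists_fChild hF hFF'
  exact fun hx' => hx'.2 (mem_biUnion hG (hFG hx))

lemma pairwiseDisjoint_stoppingCore (ℱ : Set DI) : ℱ.PairwiseDisjoint (stoppingCore ℱ) := by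
  refine fun F hF F' hF' hne => Set.disjoint_left.2 fun x hx hx' => ?_
  obtain h | h := DI.ssubset_or_ssubset_of_mem hne hx.1 hx'.1
  · exact notMem_stoppingCore_of_ssubset hF h hx.1 hx'
  · exact notMem_stoppingCore_of_ssubset hF' h hx'.1 hx

lemma ofReal_avg_abs_le_setLAverage (f : ℝ → ℝ) (s : Set ℝ) (hs : σ s ≠ ∞) :
    ENNReal.ofReal (avg σ s fun x => |f x|) ≤ ⨍⁻ x in s, ‖f x‖ₑ ∂σ := by
  obtain hs0 | hs0 := eq_or_ne (σ s) 0
  · simp [avg, hs0]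
  rw [avg, ENNReal.ofReal_div_of_pos (ENNReal.toReal_pos hs0 hs), ENNReal.ofReal_toReal hs,
    setLAverage_eq]
  gcongr
  calc ENNReal.ofReal (∫ x in s, |f x| ∂σ) ≤ ‖∫ x in s, |f x| ∂σ‖ₑ := Real.ofReal_le_enorm _
    _ ≤ ∫⁻ x in s, ‖|f x|‖ₑ ∂σ := enorm_integral_le_lintegral_enorm _
    _ = ∫⁻ x in s, ‖f x‖ₑ ∂σ := by simp only [Real.enorm_abs]

variable [IsLocallyFiniteMeasure σ]

lemma measure_le_two_mul_measure_stoppingCore {F : DI}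
    (hhalf : ∑' G : fChildren ℱ F, σ (G : DI).set ≤ σ F.set / 2) :
    σ F.set ≤ 2 * σ (stoppingCore ℱ F) := by
  have hchildren : σ (⋃ G ∈ fChildren ℱ F, G.set) ≤ σ F.set / 2 :=
    (measure_biUnion_le σ (to_countable _) DI.set).trans hhalf
  have hsplit : σ F.set / 2 + σ F.set / 2 ≤ σ (stoppingCore ℱ F) + σ F.set / 2 :=
    calc σ F.set / 2 + σ F.set / 2 = σ F.set := ENNReal.add_halves _
      _ ≤ σ (stoppingCore ℱ F ∪ ⋃ G ∈ fChildren ℱ F, G.set) :=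
          measure_mono (subset_sdiff_union _ _)
      _ ≤ σ (stoppingCore ℱ F) + σ F.set / 2 := (measure_union_le _ _).trans (by gcongr)
  have hfin : σ F.set / 2 ≠ ∞ := ENNReal.div_ne_top (F.measure_set_ne_top σ) two_ne_zero
  have hcore : σ F.set / 2 ≤ σ (stoppingCore ℱ F) := (ENNReal.add_le_add_iff_right hfin).1 hsplit
  rwa [ENNReal.div_le_iff_le_mul (.inl two_ne_zero) (.inl ENNReal.ofNat_ne_top), mul_comm] at hcore

lemma tsum_mul_measure_le_two_mul_lintegral
    (hhalf : ∀ F ∈ ℱ, ∑' G : fChildren ℱ F, σ (G : DI).set ≤ σ F.set / 2)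
    {a : DI → ℝ≥0∞} {φ : ℝ → ℝ≥0∞} (ha : ∀ F ∈ ℱ, ∀ x ∈ F.set, a F ≤ φ x) :
    ∑' F : ℱ, a F * σ (F : DI).set ≤ 2 * ∫⁻ x, φ x ∂σ := by
  have hcore (F : ℱ) :
      a F * σ (F : DI).set ≤ 2 * ∫⁻ x in stoppingCore ℱ F, φ x ∂σ :=
    calc a F * σ (F : DI).set ≤ a F * (2 * σ (stoppingCore ℱ F)) := by
          gcongr
          exact measure_le_two_mul_measure_stoppingCore (hhalf F F.2)
      _ = 2 * ∫⁻ _ in stoppingCore ℱ F, a F ∂σ := by rw [setLIntegral_const]; ring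
      _ ≤ 2 * ∫⁻ x in stoppingCore ℱ F, φ x ∂σ := by
          gcongr 2 * ?_
          exact setLIntegral_mono' (measurableSet_stoppingCore ℱ F) fun x hx => ha F F.2 x hx.1
  calc ∑' F : ℱ, a F * σ (F : DI).set
      ≤ ∑' F : ℱ, 2 * ∫⁻ x in stoppingCore ℱ F, φ x ∂σ := ENNReal.tsum_le_tsum hcore
    _ = 2 * ∫⁻ x in ⋃ F ∈ ℱ, stoppingCore ℱ F, φ x ∂σ := by
        rw [ENNReal.tsum_mul_left, lintegral_biUnion ℱ.to_countable
          (fun F _ => measurableSet_stoppingCore ℱ F) (pairwiseDisjoint_stoppingCore ℱ)]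
    _ ≤ 2 * ∫⁻ x, φ x ∂σ := by
        gcongr
        exact Measure.restrict_le_self

lemma ofReal_alphaF_le_dyadicMaximal (ℱ : Set DI) (f : ℝ → ℝ) {F : DI} {x : ℝ}
    (hx : x ∈ F.set) :
    ENNReal.ofReal (alphaF σ ℱ f F) ≤ dyadicMaximal σ ℱ (fun y => ‖f y‖ₑ) x := by
  obtain htop | htop := eq_or_ne (dyadicMaximal σ ℱ (fun y => ‖f y‖ₑ) x) ∞
  · simp [htop]
  refine ENNReal.ofReal_le_of_le_toReal (Real.iSup_le (fun G => ?_) ENNReal.toReal_nonneg)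
  refine (ENNReal.ofReal_le_iff_le_toReal htop).1 ?_
  exact (ofReal_avg_abs_le_setLAverage f _ (G.1.measure_set_ne_top σ)).trans
    (setLAverage_le_dyadicMaximal G.2.1 (G.2.2 hx))

lemma tsum_alphaF_sq_mul_measure_le
    (hhalf : ∀ F ∈ ℱ, ∑' G : fChildren ℱ F, σ (G : DI).set ≤ σ F.set / 2)
    {f : ℝ → ℝ} (hf : AEStronglyMeasurable f σ) :
    ∑' F : ℱ, ENNReal.ofReal (alphaF σ ℱ f F) ^ 2 * σ (F : DI).set ≤ 8 * eLpNorm f 2 σ ^ 2 :=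
  calc ∑' F : ℱ, ENNReal.ofReal (alphaF σ ℱ f F) ^ 2 * σ (F : DI).set
      ≤ 2 * ∫⁻ x, dyadicMaximal σ ℱ (fun y => ‖f y‖ₑ) x ^ 2 ∂σ :=
        tsum_mul_measure_le_two_mul_lintegral (a := fun F => ENNReal.ofReal (alphaF σ ℱ f F) ^ 2)
          hhalf fun F _ x hx => pow_le_pow_left' (ofReal_alphaF_le_dyadicMaximal ℱ f hx) 2
    _ ≤ 2 * (4 * ∫⁻ x, ‖f x‖ₑ ^ 2 ∂σ) := by
        gcongr
        exact lintegral_dyadicMaximal_sq_le hf.enorm ℱ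
    _ = 8 * eLpNorm f 2 σ ^ 2 := by
        rw [eLpNorm_two_sq, ← mul_assoc]
        norm_num

end StoppingCore

/-! ### Haar differences -/

section Haar

variable {ω : Measure ℝ} {g : ℝ → ℝ}

lemma avg_mul_toReal_measure (g : ℝ → ℝ) {s : Set ℝ} (hs : ω s ≠ ∞) :
    avg ω s g * (ω s).toReal = ∫ x in s, g x ∂ω := by
  obtain hs0 | hs0 := eq_or_ne (ω s) 0
  · rw [setIntegral_measure_zero _ hs0, hs0, ENNReal.toReal_zero, mul_zero]
  · exact div_mul_cancel₀ _ (ENNReal.toReal_pos hs0 hs).ne'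

lemma haar_of_notMem {J : DI} (g : ℝ → ℝ) {x : ℝ} (hx : x ∉ J.set) : haar ω J g x = 0 := by
  have hleft : x ∉ J.left.set := fun h => hx (J.left_subset h)
  have hright : x ∉ J.right.set := fun h => hx (J.right_subset h)
  simp [haar, hx, hleft, hright]

lemma haar_of_mem_left {J : DI} (g : ℝ → ℝ) {x : ℝ} (hx : x ∈ J.left.set) :
    haar ω J g x = avg ω J.left.set g - avg ω J.set g := by
  simp [haar, hx, J.left_subset hx, Set.disjoint_left.1 J.disjoint_left_right hx]

lemma haar_of_mem_right {J : DI} (g : ℝ → ℝ) {x : ℝ} (hx : x ∈ J.right.set) :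
    haar ω J g x = avg ω J.right.set g - avg ω J.set g := by
  simp [haar, hx, J.right_subset hx, Set.disjoint_right.1 J.disjoint_left_right hx]

lemma haar_eq_of_mem {J K : DI} (hk : J.k ≤ K.k) (hne : J ≠ K) (g : ℝ → ℝ) {x y : ℝ}
    (hx : x ∈ J.set) (hy : y ∈ J.set) : haar ω K g x = haar ω K g y := by
  obtain hk | hk := hk.eq_or_lt
  · have hnotMem {z : ℝ} (hz : z ∈ J.set) : z ∉ K.set := fun hzK => hne (DI.eq_of_mem hk hzK hz)
    rw [haar_of_notMem g (hnotMem hx), haar_of_notMem g (hnotMem hy)]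
  · have hchild : J.k ≤ K.k - 1 := by omega
    simp only [haar, indicator_apply, DI.mem_set_congr (I := K) hk.le hx hy,
      DI.mem_set_congr (I := K.left) hchild hx hy, DI.mem_set_congr (I := K.right) hchild hx hy]

lemma setIntegral_left_add_right {J : DI} {h : ℝ → ℝ} (hh : IntegrableOn h J.set ω) :
    ∫ x in J.left.set, h x ∂ω + ∫ x in J.right.set, h x ∂ω = ∫ x in J.set, h x ∂ω := by
  rw [← setIntegral_union J.disjoint_left_right J.right.measurableSet_set
    (hh.mono_set J.left_subset) (hh.mono_set J.right_subset), J.left_union_right]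

lemma integral_haar_mul {J : DI} {h : ℝ → ℝ} (g : ℝ → ℝ) (hh : IntegrableOn h J.set ω) :
    ∫ x, haar ω J g x * h x ∂ω
      = avg ω J.left.set g * ∫ x in J.left.set, h x ∂ω
        + avg ω J.right.set g * ∫ x in J.right.set, h x ∂ω
        - avg ω J.set g * ∫ x in J.set, h x ∂ω := by
  have hterm (K : DI) (hK : K.set ⊆ J.set) :
      Integrable (K.set.indicator fun x => avg ω K.set g * h x) ω :=
    (integrable_indicator_iff K.measurableSet_set).2 ((hh.mono_set hK).const_mul _)
  have hsum (x : ℝ) : haar ω J g x * h x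
      = J.left.set.indicator (fun x => avg ω J.left.set g * h x) x
        + J.right.set.indicator (fun x => avg ω J.right.set g * h x) x
        - J.set.indicator (fun x => avg ω J.set g * h x) x := by
    simp only [haar, indicator_apply]
    split_ifs <;> ring
  have hl := hterm J.left J.left_subset
  have hr := hterm J.right J.right_subset
  simp only [hsum]
  rw [integral_sub (by exact hl.add hr) (hterm J subset_rfl), integral_add hl hr,
    integral_indicator J.left.measurableSet_set, integral_indicator J.right.measurableSet_set,
    integral_indicator J.measurableSet_set, integral_const_mul, integral_const_mul,
    integral_const_mul]

lemma setIntegral_haar_left (J : DI) (g : ℝ → ℝ) :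
    ∫ x in J.left.set, haar ω J g x ∂ω
      = (ω J.left.set).toReal * (avg ω J.left.set g - avg ω J.set g) := by
  rw [setIntegral_congr_fun J.left.measurableSet_set fun x hx => haar_of_mem_left g hx,
    setIntegral_const]
  rfl

lemma setIntegral_haar_right (J : DI) (g : ℝ → ℝ) :
    ∫ x in J.right.set, haar ω J g x ∂ω
      = (ω J.right.set).toReal * (avg ω J.right.set g - avg ω J.set g) := by
  rw [setIntegral_congr_fun J.right.measurableSet_set fun x hx => haar_of_mem_right g hx,
    setIntegral_const]
  rfl

variable [IsLocallyFiniteMeasure ω]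

lemma memLp_haar (J : DI) (g : ℝ → ℝ) (p : ℝ≥0∞) : MemLp (haar ω J g) p ω := by
  have hind (K : DI) (c : ℝ) : MemLp (K.set.indicator fun _ => c) p ω :=
    memLp_indicator_const p K.measurableSet_set c (.inr (K.measure_set_ne_top ω))
  exact ((hind _ _).add (hind _ _)).sub (hind _ _)

lemma integral_haar {J : DI} (hg : IntegrableOn g J.set ω) : ∫ x, haar ω J g x ∂ω = 0 := by
  have h := integral_haar_mul (h := fun _ => 1) g (integrableOn_const (J.measure_set_ne_top ω))
  simp only [mul_one, setIntegral_const, smul_eq_mul, Measure.real] at h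
  rw [h, avg_mul_toReal_measure g (J.left.measure_set_ne_top ω),
    avg_mul_toReal_measure g (J.right.measure_set_ne_top ω),
    avg_mul_toReal_measure g (J.measure_set_ne_top ω), setIntegral_left_add_right hg, sub_self]

lemma integral_haar_mul_haar_self {J : DI} (hg : IntegrableOn g J.set ω) :
    ∫ x, haar ω J g x * haar ω J g x ∂ω = ∫ x, haar ω J g x * g x ∂ω := by
  have hhaar : Integrable (haar ω J g) ω := memLp_one_iff_integrable.1 (memLp_haar J g 1)
  have hhaar_J : ∫ x in J.set, haar ω J g x ∂ω = 0 := by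
    rw [setIntegral_eq_integral_of_forall_compl_eq_zero fun x hx => haar_of_notMem g hx,
      integral_haar hg]
  have hleft := avg_mul_toReal_measure g (J.left.measure_set_ne_top ω)
  have hright := avg_mul_toReal_measure g (J.right.measure_set_ne_top ω)
  have hchildren := setIntegral_left_add_right hg
  rw [integral_haar_mul g hhaar.integrableOn, integral_haar_mul g hg, hhaar_J,
    setIntegral_haar_left, setIntegral_haar_right]
  linear_combination (avg ω J.left.set g - avg ω J.set g) * hleft
    + (avg ω J.right.set g - avg ω J.set g) * hright - avg ω J.set g * hchildren

lemma integral_haar_mul_haar_of_k_le {J K : DI} (hk : J.k ≤ K.k) (hne : J ≠ K)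
    (hg : IntegrableOn g J.set ω) : ∫ x, haar ω J g x * haar ω K g x ∂ω = 0 := by
  have hconst (x : ℝ) :
      haar ω J g x * haar ω K g x = haar ω J g x * haar ω K g J.lo := by
    by_cases hx : x ∈ J.set
    · rw [haar_eq_of_mem hk hne g hx J.lo_mem]
    · simp only [haar_of_notMem g hx, zero_mul]
  simp only [hconst]
  rw [integral_mul_const, integral_haar hg, zero_mul]

lemma integrableOn_set_of_memLp_two (hg : MemLp g 2 ω) (J : DI) : IntegrableOn g J.set ω :=
  ((hg.locallyIntegrable one_le_two).integrableOn_isCompact isCompact_Icc).mono_set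
    Ico_subset_Icc_self

lemma pairwise_integral_haar_mul_haar (hg : MemLp g 2 ω) :
    Pairwise fun J K : DI => ∫ x, haar ω J g x * haar ω K g x ∂ω = 0 := by
  intro J K hne
  obtain hk | hk := le_total J.k K.k
  · exact integral_haar_mul_haar_of_k_le hk hne (integrableOn_set_of_memLp_two hg J)
  · simp only [mul_comm (haar ω J g _)]
    exact integral_haar_mul_haar_of_k_le hk hne.symm (integrableOn_set_of_memLp_two hg K)

lemma tsum_eLpNorm_haar_sq_le (hg : MemLp g 2 ω) :
    ∑' J : DI, eLpNorm (haar ω J g) 2 ω ^ 2 ≤ eLpNorm g 2 ω ^ 2 :=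
  tsum_eLpNorm_two_sq_le (fun J => memLp_haar J g 2) (pairwise_integral_haar_mul_haar hg) hg
    fun J => (integral_haar_mul_haar_self (integrableOn_set_of_memLp_two hg J)).symm

lemma eLpNorm_sum_mul_haar_le (hg : MemLp g 2 ω) {s : Finset DI} {c : DI → ℝ} {A : ℝ}
    (hc : ∀ J ∈ s, |c J| ≤ A) :
    eLpNorm (fun x => ∑ J ∈ s, c J * haar ω J g x) 2 ω
      ≤ ENNReal.ofReal A * eLpNorm (fun x => ∑ J ∈ s, haar ω J g x) 2 ω := by
  have horth : Pairwise fun J K : DI =>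
      ∫ x, (c J * haar ω J g x) * (c K * haar ω K g x) ∂ω = 0 := by
    intro J K hne
    simp only [mul_mul_mul_comm (c J)]
    rw [integral_const_mul, pairwise_integral_haar_mul_haar hg hne, mul_zero]
  rw [← ENNReal.pow_le_pow_left_iff two_ne_zero, mul_pow,
    eLpNorm_two_sum_sq (fun J => (memLp_haar J g 2).const_mul (c J)) horth,
    eLpNorm_two_sum_sq (fun J => memLp_haar J g 2) (pairwise_integral_haar_mul_haar hg),
    Finset.mul_sum]
  refine Finset.sum_le_sum fun J hJ => ?_
  have hcJ : ‖c J‖ₑ ≤ ENNReal.ofReal A := by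
    rw [Real.enorm_eq_ofReal_abs]
    exact ENNReal.ofReal_le_ofReal (hc J hJ)
  calc eLpNorm (fun x => c J * haar ω J g x) 2 ω ^ 2
      = ‖c J‖ₑ ^ 2 * eLpNorm (haar ω J g) 2 ω ^ 2 := by
        rw [← mul_pow, ← eLpNorm_const_smul]
        rfl
    _ ≤ ENNReal.ofReal A ^ 2 * eLpNorm (haar ω J g) 2 ω ^ 2 := by gcongr

lemma tsum_eLpNorm_sum_haar_sq_le (hg : MemLp g 2 ω) {ι : Type*} {S : Set ι}
    {Λ : ι → Finset DI} (hΛ : S.PairwiseDisjoint fun i => (Λ i : Set DI)) :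
    ∑' i : S, eLpNorm (fun x => ∑ J ∈ Λ i, haar ω J g x) 2 ω ^ 2 ≤ eLpNorm g 2 ω ^ 2 :=
  calc ∑' i : S, eLpNorm (fun x => ∑ J ∈ Λ i, haar ω J g x) 2 ω ^ 2
      = ∑' i : S, ∑' J : (Λ i : Set DI), eLpNorm (haar ω J g) 2 ω ^ 2 := by
        refine tsum_congr fun i => ?_
        rw [eLpNorm_two_sum_sq (fun J => memLp_haar J g 2) (pairwise_integral_haar_mul_haar hg)]
        exact (Finset.tsum_subtype' (Λ i) fun J => eLpNorm (haar ω J g) 2 ω ^ 2).symm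
    _ = ∑' J : ⋃ i ∈ S, (Λ i : Set DI), eLpNorm (haar ω J g) 2 ω ^ 2 :=
        (ENNReal.tsum_biUnion' (f := fun J => eLpNorm (haar ω J g) 2 ω ^ 2) hΛ).symm
    _ ≤ ∑' J : DI, eLpNorm (haar ω J g) 2 ω ^ 2 :=
        ENNReal.tsum_comp_le_tsum_of_injective Subtype.val_injective _
    _ ≤ eLpNorm g 2 ω ^ 2 := tsum_eLpNorm_haar_sq_le hg

end Haar

/-! ### The truncated Hilbert transform -/

section HilbertTransform

variable {σ ω : Measure ℝ} {f ψ : ℝ → ℝ} {t : ℝ}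

lemma measurable_Htr [SFinite σ] (hf : Measurable f) (t : ℝ) : Measurable (Htr σ f t) := by
  have hregion : MeasurableSet {p : ℝ × ℝ | t < |p.2 - p.1|} :=
    measurableSet_lt measurable_const (by fun_prop)
  have hkernel : Measurable
      ({p : ℝ × ℝ | t < |p.2 - p.1|}.indicator fun p => f p.2 / (p.2 - p.1)) :=
    Measurable.indicator (by fun_prop) hregion
  convert hkernel.stronglyMeasurable.integral_prod_right' (ν := σ) |>.measurable using 2 with x
  exact (integral_indicator (measurableSet_lt measurable_const (by fun_prop))).symm

lemma Htr_indicator_of_measure_zero {s : Set ℝ} (hs : σ s = 0) (f : ℝ → ℝ) (t : ℝ) :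
    Htr σ (s.indicator f) t = 0 := by
  have hzero : ∀ᵐ y ∂σ, s.indicator f y = 0 := indicator_meas_zero hs
  funext x
  refine integral_eq_zero_of_ae (ae_restrict_of_ae ?_)
  filter_upwards [hzero] with y hy
  simp [hy]

lemma eLpNorm_Htr_indicator_le_testH {a b : ℝ} (hab : a < b) (hfin : σ (Ico a b) ≠ ∞)
    (ht : 0 < t) :
    eLpNorm (Htr σ ((Ico a b).indicator 1) t) 2 ω ≤ testH σ ω * σ (Ico a b) ^ (1 / 2 : ℝ) := by
  obtain hzero | hpos := eq_or_ne (σ (Ico a b)) 0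
  · simp [Htr_indicator_of_measure_zero hzero]
  have htest : eLpNorm (Htr σ ((Ico a b).indicator 1) t) 2 ω / σ (Ico a b) ^ (1 / 2 : ℝ)
      ≤ testH σ ω :=
    le_iSup₂_of_le a b <| le_iSup₂_of_le hab t <| le_iSup_of_le ht le_rfl
  refine (ENNReal.div_le_iff ?_ ?_).1 htest
  · simp [hpos, hfin]
  · exact ENNReal.rpow_ne_top_of_nonneg (by norm_num) hfin

lemma enorm_pairH_le [SFinite σ] (hf : Measurable f) (hψ : AEStronglyMeasurable ψ ω) (t : ℝ) :
    ‖pairH σ ω f ψ t‖ₑ ≤ eLpNorm (Htr σ f t) 2 ω * eLpNorm ψ 2 ω :=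
  calc ‖pairH σ ω f ψ t‖ₑ ≤ ∫⁻ x, ‖Htr σ f t x * ψ x‖ₑ ∂ω := enorm_integral_le_lintegral_enorm _
    _ = eLpNorm (Htr σ f t • ψ) 1 ω := eLpNorm_one_eq_lintegral_enorm.symm
    _ ≤ eLpNorm (Htr σ f t) 2 ω * eLpNorm ψ 2 ω :=
        eLpNorm_smul_le_mul_eLpNorm hψ (measurable_Htr hf t).aestronglyMeasurable

end HilbertTransform

lemma enorm_pairH_sum_mul_haar_le {σ ω : Measure ℝ} [IsLocallyFiniteMeasure σ]
    [IsLocallyFiniteMeasure ω] {g : ℝ → ℝ} (hg : MemLp g 2 ω) {s : Finset DI} {c : DI → ℝ} {A : ℝ}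
    (hc : ∀ J ∈ s, |c J| ≤ A) {t : ℝ} (ht : 0 < t) (F : DI) :
    ‖pairH σ ω (F.set.indicator 1) (fun x => ∑ J ∈ s, c J * haar ω J g x) t‖ₑ
      ≤ testH σ ω * (ENNReal.ofReal A * σ F.set ^ (1 / 2 : ℝ)
          * eLpNorm (fun x => ∑ J ∈ s, haar ω J g x) 2 ω) :=
  calc ‖pairH σ ω (F.set.indicator 1) (fun x => ∑ J ∈ s, c J * haar ω J g x) t‖ₑ
      ≤ eLpNorm (Htr σ (F.set.indicator 1) t) 2 ω
          * eLpNorm (fun x => ∑ J ∈ s, c J * haar ω J g x) 2 ω :=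
        enorm_pairH_le (measurable_one.indicator F.measurableSet_set)
          (memLp_finsetSum s fun J _ => (memLp_haar J g 2).const_mul (c J)).aestronglyMeasurable t
    _ ≤ testH σ ω * σ F.set ^ (1 / 2 : ℝ)
          * (ENNReal.ofReal A * eLpNorm (fun x => ∑ J ∈ s, haar ω J g x) 2 ω) :=
        mul_le_mul' (eLpNorm_Htr_indicator_le_testH F.lo_lt_hi (F.measure_set_ne_top σ) ht)
          (eLpNorm_sum_mul_haar_le hg hc)
    _ = testH σ ω * (ENNReal.ofReal A * σ F.set ^ (1 / 2 : ℝ)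
          * eLpNorm (fun x => ∑ J ∈ s, haar ω J g x) 2 ω) := by ring

theorem statement12_general {σ ω : Measure ℝ} [IsLocallyFiniteMeasure σ]
    [IsLocallyFiniteMeasure ω] {ℱ : Set DI}
    (hhalf : ∀ F ∈ ℱ, ∑' G : fChildren ℱ F, σ (G : DI).set ≤ σ F.set / 2)
    {f : ℝ → ℝ} (hf : MemLp f 2 σ)
    {Λ : DI → Finset DI} (hΛ : ∀ F ∈ ℱ, ∀ J ∈ Λ F, J ∈ corona ℱ F)
    {lam : DI → DI → ℝ} (hlam : ∀ F ∈ ℱ, ∀ J ∈ Λ F, |lam F J| ≤ alphaF σ ℱ f F)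
    {g : ℝ → ℝ} (hg : MemLp g 2 ω) {t : ℝ} (ht : 0 < t) :
    ∑' F : ℱ, ‖pairH σ ω ((F : DI).set.indicator 1)
        (fun x => ∑ J ∈ Λ F, lam F J * haar ω J g x) t‖ₑ
      ≤ 3 * testH σ ω * eLpNorm f 2 σ * eLpNorm g 2 ω := by
  set a : ℱ → ℝ≥0∞ := fun F =>
    ENNReal.ofReal (alphaF σ ℱ f F) * σ (F : DI).set ^ (1 / 2 : ℝ)
  set b : ℱ → ℝ≥0∞ := fun F => eLpNorm (fun x => ∑ J ∈ Λ F, haar ω J g x) 2 ω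
  have hcarleson : ∑' F, a F ^ 2 ≤ 8 * eLpNorm f 2 σ ^ 2 := by
    refine le_of_eq_of_le (tsum_congr fun F => ?_) (tsum_alphaF_sq_mul_measure_le hhalf hf.1)
    rw [mul_pow, ← ENNReal.rpow_mul_natCast]
    norm_num
  have hbessel : ∑' F, b F ^ 2 ≤ eLpNorm g 2 ω ^ 2 :=
    tsum_eLpNorm_sum_haar_sq_le hg fun F hF F' hF' hne => Set.disjoint_left.2 fun J hJ hJ' =>
      hne (eq_of_mem_corona hF hF' (hΛ F hF J hJ) (hΛ F' hF' J hJ'))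
  have hsum : ∑' F, a F * b F ≤ 3 * eLpNorm f 2 σ * eLpNorm g 2 ω := by
    rw [← ENNReal.pow_le_pow_left_iff two_ne_zero]
    calc (∑' F, a F * b F) ^ 2 ≤ (∑' F, a F ^ 2) * ∑' F, b F ^ 2 := sq_tsum_mul_le a b
      _ ≤ 9 * eLpNorm f 2 σ ^ 2 * eLpNorm g 2 ω ^ 2 := by
          refine mul_le_mul' (hcarleson.trans ?_) hbessel
          gcongr
          norm_num
      _ = (3 * eLpNorm f 2 σ * eLpNorm g 2 ω) ^ 2 := by ring
  calc _ ≤ ∑' F, testH σ ω * (a F * b F) :=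
        ENNReal.tsum_le_tsum fun F => enorm_pairH_sum_mul_haar_le hg (hlam F F.2) ht F
    _ = testH σ ω * ∑' F, a F * b F := ENNReal.tsum_mul_left
    _ ≤ testH σ ω * (3 * eLpNorm f 2 σ * eLpNorm g 2 ω) := by gcongr
    _ = 3 * testH σ ω * eLpNorm f 2 σ * eLpNorm g 2 ω := by ring

/-- Control of the paraproduct form by testing. -/
theorem statement12 :
    ∃ C : ℝ, 0 < C ∧
      ∀ (σ ω : Measure ℝ), IsLocallyFiniteMeasure σ → IsLocallyFiniteMeasure ω →
      ∀ (T : DI) (ℱ : Set DI), T ∈ ℱ → (∀ F ∈ ℱ, DI.set F ⊆ T.set) →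
        (∀ F ∈ ℱ, ∑' G : fChildren ℱ F, σ (G : DI).set ≤ σ (DI.set F) / 2) →
      ∀ (f : ℝ → ℝ), MeasureTheory.MemLp f 2 σ →
      ∀ (Λ : DI → Finset DI),
        (∀ F ∈ ℱ, ∀ J ∈ Λ F, J ∈ corona ℱ F ∧
          0 < ω (DI.set (DI.left J)) ∧ 0 < ω (DI.set (DI.right J))) →
      ∀ (lam : DI → DI → ℝ),
        (∀ F ∈ ℱ, ∀ J ∈ Λ F, |lam F J| ≤ alphaF σ ℱ f F) →
      ∀ (g : ℝ → ℝ), MeasureTheory.MemLp g 2 ω →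
      ∀ t : ℝ, 0 < t →
        ENNReal.ofReal
          |∑' F : ℱ, pairH σ ω ((F : DI).set.indicator 1)
              (fun x => ∑ J ∈ Λ (F : DI), lam (F : DI) J * haar ω J g x) t| ≤
        ENNReal.ofReal C * testH σ ω * eLpNorm f 2 σ * eLpNorm g 2 ω := by
  refine ⟨3, three_pos, fun σ ω _ _ T ℱ _ _ hhalf f hf Λ hΛ lam hlam g hg t ht => ?_⟩
  rw [← Real.enorm_eq_ofReal_abs, ENNReal.ofReal_ofNat]
  exact enorm_tsum_le_tsum_enorm.trans
    (statement12_general hhalf hf (fun F hF J hJ => (hΛ F hF J hJ).1) hlam hg ht)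

end
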